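/- Let m, n ≥ 1 and let (H_ε)_{ε∈(0,1]} be a net in E_τ(ℝ^{m+n}). Suppose that for every net (f_ε)_{ε∈(0,1]} in E_S(ℝ^n), the net (x ↦ ∫_{ℝ^n} H_ε(x,y) f_ε(y) dy)_{ε∈(0,1]} belongs to N_τ(ℝ^m). Then (H_ε)_{ε∈(0,1]} belongs to N_τ(ℝ^{m+n}). Equivalently, the map sending a tempered generalized kernel H ∈ E_τ(ℝ^{m+n})/N_τ(ℝ^{m+n}) to the induced integral operator from E_S(ℝ^n)/N_S(ℝ^n) to E_τ(ℝ^m)/N_τ(ℝ^m) is injective. -/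

import Mathlib

open MeasureTheory Filter

noncomputable def mu {E : Type*} [NormedAddCommGroup E] [NormedSpace ℝ E]
    (r : ℤ) (l : ℕ) (f : E → ℂ) : ENNReal :=
  ⨆ (x : E) (i : ℕ) (_ : i ≤ l),
    ENNReal.ofReal ((1 + ‖x‖) ^ r * ‖iteratedFDeriv ℝ i f x‖)

def IsOEps (g : ℝ → ENNReal) (h : ℝ → ℝ) : Prop :=
  ∃ C > (0:ℝ), ∃ η > (0:ℝ), ∀ ε : ℝ, 0 < ε → ε ≤ η → g ε ≤ ENNReal.ofReal (C * h ε)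

def SchwartzLike {E : Type*} [NormedAddCommGroup E] [NormedSpace ℝ E] (f : E → ℂ) : Prop :=
  ContDiff ℝ (⊤ : ℕ∞) f ∧ ∀ q l : ℕ, mu (q : ℤ) l f < ⊤

def TemperateGrowth' {E : Type*} [NormedAddCommGroup E] [NormedSpace ℝ E] (f : E → ℂ) : Prop :=
  ContDiff ℝ (⊤ : ℕ∞) f ∧ ∀ l : ℕ, ∃ q : ℕ, mu (-(q:ℤ)) l f < ⊤

def IsESNet {E : Type*} [NormedAddCommGroup E] [NormedSpace ℝ E] (f : ℝ → E → ℂ) : Prop :=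
  (∀ ε ∈ Set.Ioc (0:ℝ) 1, SchwartzLike (f ε)) ∧
  ∀ q l : ℕ, ∃ N : ℕ, IsOEps (fun ε => mu (q:ℤ) l (f ε)) (fun ε => ε ^ (-(N:ℤ)))

def IsNSNet {E : Type*} [NormedAddCommGroup E] [NormedSpace ℝ E] (f : ℝ → E → ℂ) : Prop :=
  (∀ ε ∈ Set.Ioc (0:ℝ) 1, SchwartzLike (f ε)) ∧
  ∀ q l p : ℕ, IsOEps (fun ε => mu (q:ℤ) l (f ε)) (fun ε => ε ^ p)

def IsEtauNet {E : Type*} [NormedAddCommGroup E] [NormedSpace ℝ E] (f : ℝ → E → ℂ) : Prop :=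
  (∀ ε ∈ Set.Ioc (0:ℝ) 1, TemperateGrowth' (f ε)) ∧
  ∀ l : ℕ, ∃ q N : ℕ, IsOEps (fun ε => mu (-(q:ℤ)) l (f ε)) (fun ε => ε ^ (-(N:ℤ)))

def IsNtauNet {E : Type*} [NormedAddCommGroup E] [NormedSpace ℝ E] (f : ℝ → E → ℂ) : Prop :=
  (∀ ε ∈ Set.Ioc (0:ℝ) 1, TemperateGrowth' (f ε)) ∧
  ∀ l : ℕ, ∃ q : ℕ, ∀ p : ℕ, IsOEps (fun ε => mu (-(q:ℤ)) l (f ε)) (fun ε => ε ^ p)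

noncomputable def scaled {d : ℕ} (ρ : (Fin d → ℝ) → ℂ) (t : ℝ) (x : Fin d → ℝ) : ℂ :=
  ((t ^ (-(d:ℤ)) : ℝ) : ℂ) * ρ (t⁻¹ • x)

def IsMollifier {d : ℕ} (ρ : SchwartzMap (Fin d → ℝ) ℂ) : Prop :=
  (∫ x : Fin d → ℝ, ρ x) = 1 ∧
  ∀ α : Fin d → ℕ, α ≠ 0 → (∫ x : Fin d → ℝ, (∏ j, (x j : ℂ) ^ (α j)) * ρ x) = 0

def MemLa (a : ℝ) (N : ℕ → ℝ) : Prop :=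
  (∀ l, 0 ≤ N l) ∧
  ((a = 0 ∧ Filter.Tendsto (fun l : ℕ => N l / (l:ℝ)) Filter.atTop (nhds 0)) ∨
   (0 < a ∧ Filter.limsup (fun l : ℕ => N l / (l:ℝ)) Filter.atTop < a))

def IsESLNet {E : Type*} [NormedAddCommGroup E] [NormedSpace ℝ E]
    (a : ℝ) (f : ℝ → E → ℂ) : Prop :=
  (∀ ε ∈ Set.Ioc (0:ℝ) 1, SchwartzLike (f ε)) ∧
  ∃ N : ℕ → ℝ, MemLa a N ∧
    ∀ q l : ℕ, IsOEps (fun ε => mu (q:ℤ) l (f ε)) (fun ε => ε ^ (-(N l)))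

def IsEtauLNet {E : Type*} [NormedAddCommGroup E] [NormedSpace ℝ E]
    (c : ℝ) (f : ℝ → E → ℂ) : Prop :=
  (∀ ε ∈ Set.Ioc (0:ℝ) 1, TemperateGrowth' (f ε)) ∧
  ∃ N : ℕ → ℝ, MemLa c N ∧ ∃ q : ℕ, ∀ l : ℕ,
    IsOEps (fun ε => mu (-(q:ℤ)) l (f ε)) (fun ε => ε ^ (-(N l)))

def IsESinfNet {E : Type*} [NormedAddCommGroup E] [NormedSpace ℝ E] (f : ℝ → E → ℂ) : Prop :=
  (∀ ε ∈ Set.Ioc (0:ℝ) 1, SchwartzLike (f ε)) ∧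
  ∃ N : ℕ, ∀ q l : ℕ, IsOEps (fun ε => mu (q:ℤ) l (f ε)) (fun ε => ε ^ (-(N:ℤ)))

def ModerateNetMaps (m n : ℕ)
    (L : ℝ → SchwartzMap (Fin n → ℝ) ℂ → ((Fin m → ℝ) → ℂ)) : Prop :=
  (∀ ε ∈ Set.Ioc (0:ℝ) 1, ∀ f, TemperateGrowth' (L ε f)) ∧
  ∀ l : ℕ, ∃ C : ℝ → ℝ, (∀ ε, 0 ≤ C ε) ∧
    (∃ N : ℕ, ∃ C₀ > (0:ℝ), ∃ η > (0:ℝ), ∀ ε : ℝ, 0 < ε → ε ≤ η → C ε ≤ C₀ * ε ^ (-(N:ℤ))) ∧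
    ∃ p q l' : ℕ, ∃ η > (0:ℝ), ∀ ε : ℝ, 0 < ε → ε ≤ η →
      ∀ f : SchwartzMap (Fin n → ℝ) ℂ,
        mu (-(p:ℤ)) l (L ε f) ≤ ENNReal.ofReal (C ε) * mu (q:ℤ) l' ⇑f

def NegligibleNetMaps (m n : ℕ)
    (L : ℝ → SchwartzMap (Fin n → ℝ) ℂ → ((Fin m → ℝ) → ℂ)) : Prop :=
  (∀ ε ∈ Set.Ioc (0:ℝ) 1, ∀ f, TemperateGrowth' (L ε f)) ∧
  ∀ l : ℕ, ∃ C : ℝ → ℝ, (∀ ε, 0 ≤ C ε) ∧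
    (∀ p' : ℕ, ∃ C₀ > (0:ℝ), ∃ η > (0:ℝ), ∀ ε : ℝ, 0 < ε → ε ≤ η → C ε ≤ C₀ * ε ^ p') ∧
    ∃ p q l' : ℕ, ∃ η > (0:ℝ), ∀ ε : ℝ, 0 < ε → ε ≤ η →
      ∀ f : SchwartzMap (Fin n → ℝ) ℂ,
        mu (-(p:ℤ)) l (L ε f) ≤ ENNReal.ofReal (C ε) * mu (q:ℤ) l' ⇑f

def StronglyModerateWith (m n : ℕ)
    (L : ℝ → SchwartzMap (Fin n → ℝ) ℂ → ((Fin m → ℝ) → ℂ))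
    (lam : ℕ → ℕ) (r : ℕ → ℝ) : Prop :=
  (∀ ε ∈ Set.Ioc (0:ℝ) 1, ∀ f, TemperateGrowth' (L ε f)) ∧
  (∀ l, 0 ≤ r l) ∧
  ∀ l : ℕ, ∃ C ≥ (0:ℝ), ∃ p q : ℕ, ∃ η > (0:ℝ), ∀ ε : ℝ, 0 < ε → ε ≤ η →
    ∀ f : SchwartzMap (Fin n → ℝ) ℂ,
      mu (-(p:ℤ)) l (L ε f) ≤ ENNReal.ofReal (C * ε ^ (-(r l))) * mu (q:ℤ) (lam l) ⇑f

def ContinuousIntoOM (m n : ℕ) (L : SchwartzMap (Fin n → ℝ) ℂ → ((Fin m → ℝ) → ℂ)) : Prop :=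
  ∀ l : ℕ, ∃ C ≥ (0:ℝ), ∃ p q l' : ℕ, ∀ f,
    mu (-(p:ℤ)) l (L f) ≤ ENNReal.ofReal C * mu (q:ℤ) l' ⇑f

noncomputable def muOn {d : ℕ} (Ω : Set (Fin d → ℝ)) (r : ℤ) (l : ℕ)
    (f : (Fin d → ℝ) → ℂ) : ENNReal :=
  ⨆ (x : Ω) (i : ℕ) (_ : i ≤ l),
    ENNReal.ofReal ((1 + ‖(x : Fin d → ℝ)‖) ^ r * ‖iteratedFDerivWithin ℝ i f Ω (x : Fin d → ℝ)‖)

def IsBox {d : ℕ} (Ω : Set (Fin d → ℝ)) : Prop :=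
  ∃ I : Fin d → Set ℝ, (∀ j, IsOpen (I j) ∧ Convex ℝ (I j)) ∧ Ω = Set.univ.pi I

def IsRegularSet (R : Set (ℕ → ℝ)) : Prop :=
  R.Nonempty ∧ (∀ N ∈ R, ∀ n, 0 ≤ N n) ∧
  (∀ N ∈ R, ∀ k : ℕ, ∃ N' ∈ R, ∀ n, N n + k ≤ N' n) ∧
  (∀ N₁ ∈ R, ∀ N₂ ∈ R, ∃ N ∈ R, ∀ n, max (N₁ n) (N₂ n) ≤ N n) ∧
  (∀ N₁ ∈ R, ∀ N₂ ∈ R, ∃ N ∈ R, ∀ l₁ l₂ : ℕ, N₁ l₁ + N₂ l₂ ≤ N (l₁ + l₂))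

def IsESRNet {E : Type*} [NormedAddCommGroup E] [NormedSpace ℝ E]
    (R : Set (ℕ → ℝ)) (f : ℝ → E → ℂ) : Prop :=
  (∀ ε ∈ Set.Ioc (0:ℝ) 1, SchwartzLike (f ε)) ∧
  ∃ N ∈ R, ∀ q l : ℕ, IsOEps (fun ε => mu (q:ℤ) l (f ε)) (fun ε => ε ^ (-(N l)))

def IsEtauRNet {E : Type*} [NormedAddCommGroup E] [NormedSpace ℝ E]
    (R : Set (ℕ → ℝ)) (f : ℝ → E → ℂ) : Prop :=
  (∀ ε ∈ Set.Ioc (0:ℝ) 1, TemperateGrowth' (f ε)) ∧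
  ∃ N ∈ R, ∃ q : ℕ, ∀ l : ℕ,
    IsOEps (fun ε => mu (-(q:ℤ)) l (f ε)) (fun ε => ε ^ (-(N l)))

noncomputable def pderiv' {d : ℕ} (j : Fin d) (f : (Fin d → ℝ) → ℂ) : (Fin d → ℝ) → ℂ :=
  fun x => fderiv ℝ f x (Pi.single j 1)

noncomputable def multiDeriv {d : ℕ} : List (Fin d) → ((Fin d → ℝ) → ℂ) → ((Fin d → ℝ) → ℂ)
  | [], f => f
  | j :: js, f => pderiv' j (multiDeriv js f)

/-!
The test nets detect `H` pointwise. Given points `(x_ε, y_ε)` of moderate growth, let `δ_ε` be a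
bump of unit mass at scale `ε ^ M` around `y_ε`; these form a net in `E_S`. If `M` is large, the
moderate gradient bound on `H` makes `∫ H_ε(x_ε, y) δ_ε(y) dy` differ from `H_ε(x_ε, y_ε)` by a
prescribed power of `ε`. Hence `H` has negligible values at all moderate points.

Pointwise negligibility is uniform: one extra factor `1 + |z|` in the weight forces any violation
of the bound by `ε ^ p` to occur at a moderate point, so a choice of violating points would
contradict the negligibility of point values. Finally a Landau-type interpolation inequality
bounds a derivative by those of the neighbouring orders, and so carries negligibility from order
zero to all derivatives of a moderate net.
-/

open Asymptotics Module Topology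
open scoped ContDiff

section Interpolation

lemma one_add_norm_pow_le_of_norm_sub_le_one {E : Type*} [SeminormedAddCommGroup E] {z w : E}
    (h : ‖w - z‖ ≤ 1) (q : ℕ) :
    (1 + ‖w‖) ^ q ≤ 2 ^ q * (1 + ‖z‖) ^ q := by
  rw [← mul_pow]
  gcongr
  linarith [norm_nonneg z, norm_le_norm_add_norm_sub' w z]

variable {E G : Type*} [NormedAddCommGroup E] [NormedSpace ℝ E]
  [NormedAddCommGroup G] [NormedSpace ℝ G] {g : E → G} {z w : E} {A B L h : ℝ} {q : ℕ}

lemma norm_sub_le_of_norm_fderiv_le_weight (hg : Differentiable ℝ g)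
    (hB : ∀ x, ‖fderiv ℝ g x‖ ≤ B * (1 + ‖x‖) ^ q) (hwz : ‖w - z‖ ≤ 1) :
    ‖g w - g z‖ ≤ 2 ^ q * B * (1 + ‖z‖) ^ q * ‖w - z‖ := by
  have hB0 : 0 ≤ B := by simpa using (norm_nonneg _).trans (hB 0)
  refine (convex_closedBall z 1).norm_image_sub_le_of_norm_fderiv_le (𝕜 := ℝ)
    (fun x _ => hg x) (fun x hx => ?_) (Metric.mem_closedBall_self zero_le_one)
    (mem_closedBall_iff_norm.2 hwz)
  calc ‖fderiv ℝ g x‖ ≤ B * (1 + ‖x‖) ^ q := hB x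
    _ ≤ B * (2 ^ q * (1 + ‖z‖) ^ q) := by
      gcongr
      exact one_add_norm_pow_le_of_norm_sub_le_one (mem_closedBall_iff_norm.1 hx) q
    _ = 2 ^ q * B * (1 + ‖z‖) ^ q := by ring

lemma norm_fderiv_le_of_forall_mem_closedBall (hg : Differentiable ℝ g) (hh : 0 < h)
    (hA : ∀ x ∈ Metric.closedBall z h, ‖g x‖ ≤ A)
    (hL : ∀ x ∈ Metric.closedBall z h, ‖fderiv ℝ g x - fderiv ℝ g z‖ ≤ L) :
    ‖fderiv ℝ g z‖ ≤ 2 * A / h + L := by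
  have hz : z ∈ Metric.closedBall z h := Metric.mem_closedBall_self hh.le
  have hA0 : 0 ≤ A := (norm_nonneg _).trans (hA z hz)
  have hL0 : 0 ≤ L := (norm_nonneg _).trans (hL z hz)
  refine ContinuousLinearMap.opNorm_le_of_unit_norm (by positivity) fun v hv => ?_
  have hzv : z + h • v ∈ Metric.closedBall z h := by
    simp [norm_smul, hv, abs_of_pos hh]
  have taylor : ‖g (z + h • v) - g z - h • fderiv ℝ g z v‖ ≤ L * h := by
    simpa [norm_smul, hv, abs_of_pos hh] using
      (convex_closedBall z h).norm_image_sub_le_of_norm_fderiv_le' (𝕜 := ℝ)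
        (fun x _ => hg x) hL hz hzv
  have increment : ‖g (z + h • v) - g z‖ ≤ 2 * A := by
    linarith [norm_sub_le (g (z + h • v)) (g z), hA _ hzv, hA z hz]
  have scaled_bound : h * ‖fderiv ℝ g z v‖ ≤ 2 * A + L * h := by
    rw [← Real.norm_of_nonneg hh.le, ← norm_smul, Real.norm_of_nonneg hh.le]
    linarith [norm_le_norm_add_norm_sub (g (z + h • v) - g z) (h • fderiv ℝ g z v),
      norm_sub_rev (g (z + h • v) - g z) (h • fderiv ℝ g z v)]
  calc ‖fderiv ℝ g z v‖ ≤ (2 * A + L * h) / h := (le_div_iff₀' hh).2 scaled_bound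
    _ = 2 * A / h + L := by field_simp

lemma norm_fderiv_le_of_weighted_bounds (hg : ContDiff ℝ 2 g) (hh : 0 < h) (hh1 : h ≤ 1)
    (hA : ∀ x, ‖g x‖ ≤ A * (1 + ‖x‖) ^ q)
    (hB : ∀ x, ‖fderiv ℝ (fderiv ℝ g) x‖ ≤ B * (1 + ‖x‖) ^ q) (z : E) :
    ‖fderiv ℝ g z‖ ≤ 2 ^ q * (2 * A / h + B * h) * (1 + ‖z‖) ^ q := by
  have hA0 : 0 ≤ A := by simpa using (norm_nonneg _).trans (hA 0)
  have hB0 : 0 ≤ B := by simpa using (norm_nonneg (fderiv ℝ (fderiv ℝ g) 0)).trans (hB 0)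
  have hg' : Differentiable ℝ (fderiv ℝ g) :=
    (hg.fderiv_right (m := 1) (by norm_num)).differentiable one_ne_zero
  have near : ∀ x ∈ Metric.closedBall z h, ‖x - z‖ ≤ h := fun x => mem_closedBall_iff_norm.1
  refine (norm_fderiv_le_of_forall_mem_closedBall (hg.differentiable two_ne_zero) hh
    (A := A * (2 ^ q * (1 + ‖z‖) ^ q)) (L := 2 ^ q * B * (1 + ‖z‖) ^ q * h)
    (fun x hx => (hA x).trans ?_) fun x hx => ?_).trans_eq (by ring)
  · gcongr
    exact one_add_norm_pow_le_of_norm_sub_le_one ((near x hx).trans hh1) q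
  · refine (norm_sub_le_of_norm_fderiv_le_weight hg' hB ((near x hx).trans hh1)).trans ?_
    gcongr
    exact near x hx

lemma norm_fderiv_linearIsometryEquiv_comp {G' : Type*} [NormedAddCommGroup G'] [NormedSpace ℝ G']
    (L : G ≃ₗᵢ[ℝ] G') (g : E → G) (x : E) : ‖fderiv ℝ (L ∘ g) x‖ = ‖fderiv ℝ g x‖ := by
  rw [← norm_iteratedFDeriv_one, ← norm_iteratedFDeriv_one, L.norm_iteratedFDeriv_comp_left]

lemma norm_iteratedFDeriv_succ_le_of_weighted_bounds {i : ℕ}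
    (hg : ContDiff ℝ (i + 2) g) (hh : 0 < h) (hh1 : h ≤ 1)
    (hA : ∀ x, ‖iteratedFDeriv ℝ i g x‖ ≤ A * (1 + ‖x‖) ^ q)
    (hB : ∀ x, ‖iteratedFDeriv ℝ (i + 2) g x‖ ≤ B * (1 + ‖x‖) ^ q) (z : E) :
    ‖iteratedFDeriv ℝ (i + 1) g z‖ ≤ 2 ^ q * (2 * A / h + B * h) * (1 + ‖z‖) ^ q := by
  rw [← norm_fderiv_iteratedFDeriv]
  refine norm_fderiv_le_of_weighted_bounds
    (hg.iteratedFDeriv_right (add_comm _ _).le) hh hh1 hA (fun x => ?_) z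
  rw [fderiv_iteratedFDeriv, norm_fderiv_linearIsometryEquiv_comp, norm_fderiv_iteratedFDeriv]
  exact hB x

end Interpolation

section Seminorms

variable {E : Type*} [NormedAddCommGroup E] [NormedSpace ℝ E] {f : ℝ → E → ℂ} {q l N p : ℕ}

lemma ofReal_le_mu (r : ℤ) {i : ℕ} (hi : i ≤ l) (g : E → ℂ) (x : E) :
    ENNReal.ofReal ((1 + ‖x‖) ^ r * ‖iteratedFDeriv ℝ i g x‖) ≤ mu r l g :=
  le_iSup_of_le x <| le_iSup₂_of_le i hi le_rfl

lemma mu_neg_le_ofReal_iff {g : E → ℂ} {B : ℝ} (hB : 0 ≤ B) :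
    mu (-(q : ℤ)) l g ≤ ENNReal.ofReal B ↔
      ∀ x, ∀ i ≤ l, ‖iteratedFDeriv ℝ i g x‖ ≤ B * (1 + ‖x‖) ^ q := by
  simp only [mu, iSup_le_iff]
  refine forall₃_congr fun x i _ => ?_
  rw [ENNReal.ofReal_le_ofReal_iff hB, zpow_neg, zpow_natCast,
    inv_mul_le_iff₀ (by positivity), mul_comm]

lemma mu_neg_antitone (g : E → ℂ) : Antitone fun q : ℕ => mu (-(q : ℤ)) l g := by
  intro q q' hq
  dsimp only [mu]
  gcongr with x
  linarith [norm_nonneg x]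

lemma isOEps_iff_eventually {g : ℝ → ENNReal} {h : ℝ → ℝ} :
    IsOEps g h ↔ ∃ C > 0, ∀ᶠ ε in 𝓝[>] (0 : ℝ), g ε ≤ ENNReal.ofReal (C * h ε) := by
  simp only [IsOEps, Filter.Eventually, mem_nhdsGT_iff_exists_Ioc_subset, Set.subset_def,
    Set.mem_Ioc, and_imp, Set.mem_Ioi, Set.mem_ofPred_eq, gt_iff_lt]

lemma IsOEps.mono {g g' : ℝ → ENNReal} {h : ℝ → ℝ} (hg : IsOEps g h) (hle : ∀ ε, g' ε ≤ g ε) :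
    IsOEps g' h := by
  obtain ⟨C, hC, η, hη, hb⟩ := hg
  exact ⟨C, hC, η, hη, fun ε hε hεη => (hle ε).trans (hb ε hε hεη)⟩

lemma isOEps_mu_neg_iff {h : ℝ → ℝ} (hh : ∀ ε, 0 < ε → 0 ≤ h ε) :
    IsOEps (fun ε => mu (-(q : ℤ)) l (f ε)) h ↔
      ∃ C > 0, ∀ᶠ ε in 𝓝[>] (0 : ℝ),
        ∀ x, ∀ i ≤ l, ‖iteratedFDeriv ℝ i (f ε) x‖ ≤ C * h ε * (1 + ‖x‖) ^ q := by
  rw [isOEps_iff_eventually]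
  refine exists_congr fun C => and_congr_right fun hC => eventually_congr ?_
  filter_upwards [self_mem_nhdsWithin] with ε hε
  exact mu_neg_le_ofReal_iff (mul_nonneg hC.le (hh ε hε))

lemma isOEps_mu_neg_zero_iff {h : ℝ → ℝ} (hh : ∀ ε, 0 < ε → 0 ≤ h ε) :
    IsOEps (fun ε => mu (-(q : ℤ)) 0 (f ε)) h ↔
      ∃ C > 0, ∀ᶠ ε in 𝓝[>] (0 : ℝ), ∀ x, ‖f ε x‖ ≤ C * h ε * (1 + ‖x‖) ^ q := by
  simp only [isOEps_mu_neg_iff hh, Nat.le_zero, forall_eq, norm_iteratedFDeriv_zero]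

lemma eventually_mem_Ioc_zero_one : ∀ᶠ ε in 𝓝[>] (0 : ℝ), ε ∈ Set.Ioc 0 1 :=
  Ioc_mem_nhdsGT one_pos

-- The step `h = ε ^ (N + p)` balances the two terms of the interpolation inequality.
lemma isOEps_mu_neg_succ (hf : ∀ ε ∈ Set.Ioc (0 : ℝ) 1, ContDiff ℝ ∞ (f ε))
    (hl : IsOEps (fun ε => mu (-(q : ℤ)) l (f ε)) (fun ε => ε ^ (N + 2 * p)))
    (hl2 : IsOEps (fun ε => mu (-(q : ℤ)) (l + 2) (f ε)) (fun ε => ε ^ (-(N : ℤ)))) :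
    IsOEps (fun ε => mu (-(q : ℤ)) (l + 1) (f ε)) (fun ε => ε ^ p) := by
  rw [isOEps_mu_neg_iff fun ε hε => by positivity] at hl hl2 ⊢
  obtain ⟨A, hA, hlA⟩ := hl
  obtain ⟨B, hB, hlB⟩ := hl2
  refine ⟨A + 2 ^ q * (2 * A + B), by positivity, ?_⟩
  filter_upwards [hlA, hlB, eventually_mem_Ioc_zero_one] with ε hεA hεB hε x i hi
  have hε0 : 0 < ε := hε.1
  rcases Nat.le_succ_iff.1 hi with hi | rfl
  · calc ‖iteratedFDeriv ℝ i (f ε) x‖ ≤ A * ε ^ (N + 2 * p) * (1 + ‖x‖) ^ q := hεA x i hi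
      _ ≤ (A + 2 ^ q * (2 * A + B)) * ε ^ p * (1 + ‖x‖) ^ q := by
        have hpow : ε ^ (N + 2 * p) ≤ ε ^ p := pow_le_pow_of_le_one hε0.le hε.2 (by omega)
        gcongr
        exact le_add_of_nonneg_right (by positivity)
  · calc ‖iteratedFDeriv ℝ (l + 1) (f ε) x‖
        ≤ 2 ^ q * (2 * (A * ε ^ (N + 2 * p)) / ε ^ (N + p) + B * ε ^ (-(N : ℤ)) * ε ^ (N + p)) *
            (1 + ‖x‖) ^ q :=
          norm_iteratedFDeriv_succ_le_of_weighted_bounds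
            (mod_cast contDiff_infty.1 (hf ε hε) (l + 2)) (by positivity)
            (pow_le_one₀ hε0.le hε.2) (fun z => hεA z l le_rfl) (fun z => hεB z _ le_rfl) x
      _ = 2 ^ q * (2 * A + B) * ε ^ p * (1 + ‖x‖) ^ q := by
        rw [zpow_neg, zpow_natCast]
        field_simp
        ring
      _ ≤ (A + 2 ^ q * (2 * A + B)) * ε ^ p * (1 + ‖x‖) ^ q := by
        gcongr
        exact le_add_of_nonneg_left hA.le

/-- A net all of whose values, with no condition on the derivatives, are bounded by every power
of `ε`, uniformly against a fixed polynomial weight: the condition defining `N_τ` for `l = 0`. -/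
def IsNegligibleOfOrderZero (f : ℝ → E → ℂ) : Prop :=
  ∃ q : ℕ, ∀ p : ℕ, IsOEps (fun ε => mu (-(q : ℤ)) 0 (f ε)) (fun ε => ε ^ p)

lemma IsNtauNet.isNegligibleOfOrderZero (hf : IsNtauNet f) : IsNegligibleOfOrderZero f := hf.2 0

lemma IsEtauNet.isNtauNet_of_isNegligibleOfOrderZero (hf : IsEtauNet f)
    (hf0 : IsNegligibleOfOrderZero f) : IsNtauNet f := by
  refine ⟨hf.1, fun l => ?_⟩
  induction l with
  | zero => exact hf0
  | succ l ih =>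
    obtain ⟨q, hq⟩ := ih
    obtain ⟨q', N, hq'⟩ := hf.2 (l + 2)
    exact ⟨max q q', fun p => isOEps_mu_neg_succ (fun ε hε => (hf.1 ε hε).1)
      ((hq (N + 2 * p)).mono fun ε => mu_neg_antitone (f ε) (le_max_left q q'))
      (hq'.mono fun ε => mu_neg_antitone (f ε) (le_max_right q q'))⟩

end Seminorms

section PointValues

variable {E F : Type*} [NormedAddCommGroup E] [NormedAddCommGroup F]

/-- A net of points of at most polynomial growth in `1 / ε`, representing a generalized point at
which moderate nets can be evaluated. The weight `1 + ‖z ε‖` of the seminorms is bounded instead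
of `‖z ε‖`. -/
def IsModeratePoint (z : ℝ → E) : Prop :=
  ∃ K : ℕ, (fun ε => 1 + ‖z ε‖) =O[𝓝[>] 0] fun ε : ℝ => ε ^ (-(K : ℤ))

lemma IsModeratePoint.of_norm_le {z : ℝ → E} {w : ℝ → F} (hz : IsModeratePoint z)
    (hwz : ∀ ε, ‖w ε‖ ≤ ‖z ε‖) : IsModeratePoint w := by
  obtain ⟨K, hK⟩ := hz
  refine ⟨K, IsBigO.trans (IsBigO.of_norm_le fun ε => ?_) hK⟩
  rw [Real.norm_of_nonneg (by positivity)]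
  gcongr
  exact hwz ε

variable [NormedSpace ℝ E] {f : ℝ → E → ℂ} {z : ℝ → E} {q : ℕ}

lemma isBigO_apply_of_isOEps_mu_neg {h : ℝ → ℝ} (hh : ∀ ε, 0 < ε → 0 ≤ h ε)
    (hf : IsOEps (fun ε => mu (-(q : ℤ)) 0 (f ε)) h) (z : ℝ → E) :
    (fun ε => f ε (z ε)) =O[𝓝[>] 0] fun ε => h ε * (1 + ‖z ε‖) ^ q := by
  obtain ⟨C, -, hC⟩ := (isOEps_mu_neg_zero_iff hh).1 hf
  refine .of_bound C ?_
  filter_upwards [hC, self_mem_nhdsWithin] with ε hε hε0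
  rw [Real.norm_of_nonneg (mul_nonneg (hh ε hε0) (by positivity)), ← mul_assoc]
  exact hε (z ε)

lemma isBigO_zpow_mul_pow {u : ℝ → ℝ} {K : ℕ} (hu : u =O[𝓝[>] 0] fun ε : ℝ => ε ^ (-(K : ℤ)))
    (N q p : ℕ) :
    (fun ε : ℝ => ε ^ (-(N : ℤ)) * u ε ^ q * ε ^ (N + K * q + p)) =O[𝓝[>] 0]
      fun ε => ε ^ p := by
  refine (((isBigO_refl _ _).mul (hu.pow q)).mul (isBigO_refl _ _)).congr' .rfl ?_
  filter_upwards [self_mem_nhdsWithin] with ε (hε : 0 < ε)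
  simp only [zpow_neg, zpow_natCast, pow_add, pow_mul, inv_pow]
  field_simp

lemma IsNegligibleOfOrderZero.isBigO_apply (hf : IsNegligibleOfOrderZero f)
    (hz : IsModeratePoint z) (p : ℕ) :
    (fun ε => f ε (z ε)) =O[𝓝[>] 0] fun ε => ε ^ p := by
  obtain ⟨q, hq⟩ := hf
  obtain ⟨K, hK⟩ := hz
  refine (isBigO_apply_of_isOEps_mu_neg (fun ε hε => by positivity) (hq (K * q + p)) z).trans ?_
  simpa [mul_comm] using isBigO_zpow_mul_pow hK 0 q p

-- The additional factor `1 + ‖w‖` in the weight makes violations of the bound moderate.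
lemma isModeratePoint_of_violation {N p : ℕ}
    (hf : IsOEps (fun ε => mu (-(q : ℤ)) 0 (f ε)) (fun ε => ε ^ (-(N : ℤ))))
    (hz : ∀ ε, 0 < ε → z ε = 0 ∨ ε ^ p * (1 + ‖z ε‖) ^ (q + 1) < ‖f ε (z ε)‖) :
    IsModeratePoint z := by
  obtain ⟨C, hC, hfC⟩ := (isOEps_mu_neg_zero_iff fun ε hε => by positivity).1 hf
  refine ⟨N + p, .of_bound (max C 1) ?_⟩
  filter_upwards [hfC, eventually_mem_Ioc_zero_one] with ε hεC hε
  have hε0 : 0 < ε := hε.1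
  rw [Real.norm_of_nonneg (by positivity), Real.norm_of_nonneg (by positivity), zpow_neg,
    zpow_natCast, ← div_eq_mul_inv, le_div_iff₀ (by positivity)]
  rcases hz ε hε0 with hz0 | hviol
  · rw [hz0, norm_zero, add_zero, one_mul]
    exact (pow_le_one₀ hε0.le hε.2).trans (le_max_right _ _)
  · have key : ε ^ p * (1 + ‖z ε‖) ^ (q + 1) ≤ C * ε ^ (-(N : ℤ)) * (1 + ‖z ε‖) ^ q :=
      hviol.le.trans (hεC (z ε))
    refine le_max_of_le_left (le_of_mul_le_mul_right ?_ (by positivity : 0 < (1 + ‖z ε‖) ^ q))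
    calc (1 + ‖z ε‖) * ε ^ (N + p) * (1 + ‖z ε‖) ^ q
        = ε ^ N * (ε ^ p * (1 + ‖z ε‖) ^ (q + 1)) := by ring
      _ ≤ ε ^ N * (C * ε ^ (-(N : ℤ)) * (1 + ‖z ε‖) ^ q) := by gcongr
      _ = C * (1 + ‖z ε‖) ^ q := by
        rw [zpow_neg, zpow_natCast]
        field_simp

lemma IsEtauNet.isNegligibleOfOrderZero_of_isBigO_apply (hf : IsEtauNet f)
    (hpt : ∀ z, IsModeratePoint z → ∀ p : ℕ,
      (fun ε => f ε (z ε)) =O[𝓝[>] 0] fun ε : ℝ => ε ^ p) :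
    IsNegligibleOfOrderZero f := by
  obtain ⟨q, N, hqN⟩ := hf.2 0
  refine ⟨q + 1, fun p => (isOEps_mu_neg_zero_iff fun ε hε => by positivity).2 ⟨1, one_pos, ?_⟩⟩
  have hviol : ∀ ε, ∃ z, (z = 0 ∧ ∀ w, ‖f ε w‖ ≤ ε ^ p * (1 + ‖w‖) ^ (q + 1)) ∨
      ε ^ p * (1 + ‖z‖) ^ (q + 1) < ‖f ε z‖ := fun ε => by
    by_cases h : ∀ w, ‖f ε w‖ ≤ ε ^ p * (1 + ‖w‖) ^ (q + 1)
    · exact ⟨0, .inl ⟨rfl, h⟩⟩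
    · push Not at h
      exact h.imp fun z hz => .inr hz
  choose z hz using hviol
  have hmod : IsModeratePoint z :=
    isModeratePoint_of_violation hqN fun ε _ => (hz ε).imp_left And.left
  have hsmall : (fun ε => f ε (z ε)) =o[𝓝[>] 0] fun ε : ℝ => ε ^ p :=
    (hpt z hmod (p + 1)).trans_isLittleO
      ((isLittleO_pow_pow p.lt_succ_self).mono nhdsWithin_le_nhds)
  filter_upwards [hsmall.bound one_pos, self_mem_nhdsWithin] with ε hε (hε0 : 0 < ε) w
  rw [one_mul]
  refine ((hz ε).resolve_right (not_lt.2 ?_)).2 w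
  calc ‖f ε (z ε)‖ ≤ ε ^ p := by simpa [abs_of_pos hε0] using hε
    _ ≤ ε ^ p * (1 + ‖z ε‖) ^ (q + 1) :=
      le_mul_of_one_le_right (by positivity) (one_le_pow₀ (by simp))

end PointValues

section Mollification

section SchwartzLike

variable {E : Type*} [NormedAddCommGroup E] [NormedSpace ℝ E]

lemma schwartzLike_coe (ψ : SchwartzMap E ℂ) : SchwartzLike ψ := by
  refine ⟨ψ.smooth ⊤, fun q l => lt_of_le_of_lt ?_
    (ENNReal.ofReal_lt_top (r := 2 ^ q * (Finset.Iic (q, l)).sup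
      (fun m => SchwartzMap.seminorm ℝ m.1 m.2) ψ))⟩
  refine iSup_le fun x => iSup₂_le fun i hi => ENNReal.ofReal_le_ofReal ?_
  rw [zpow_natCast]
  exact SchwartzMap.one_add_le_sup_seminorm_apply (m := (q, l)) le_rfl hi ψ x

lemma schwartzLike_of_hasCompactSupport {ψ : E → ℂ} (hψ : ContDiff ℝ ∞ ψ)
    (hc : HasCompactSupport ψ) : SchwartzLike ψ :=
  schwartzLike_coe (hc.toSchwartzMap hψ)

end SchwartzLike

variable {F : Type*} [NormedAddCommGroup F] [NormedSpace ℝ F] {ψ : F → ℂ} {s : ℝ}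

/-- The function `ψ` moved to scale `s` around the point `c`, with its integral preserved. -/
noncomputable def concentrate (ψ : F → ℂ) (s : ℝ) (c y : F) : ℂ :=
  (s ^ finrank ℝ F)⁻¹ • ψ (s⁻¹ • (y - c))

lemma contDiff_concentrate (hψ : ContDiff ℝ ∞ ψ) (s : ℝ) (c : F) :
    ContDiff ℝ ∞ (concentrate ψ s c) := by
  unfold concentrate
  fun_prop

lemma norm_iteratedFDeriv_concentrate {i : ℕ} (hψ : ContDiff ℝ i ψ) (hs : 0 < s) (c y : F) :
    ‖iteratedFDeriv ℝ i (concentrate ψ s c) y‖ =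
      (s ^ (finrank ℝ F + i))⁻¹ * ‖iteratedFDeriv ℝ i ψ (s⁻¹ • (y - c))‖ := by
  have h : concentrate ψ s c =
      (s ^ finrank ℝ F)⁻¹ • fun y => (fun x => ψ (s⁻¹ • x)) (y - c) := rfl
  rw [h, iteratedFDeriv_const_smul_apply (by fun_prop),
    iteratedFDeriv_comp_sub (f := fun x => ψ (s⁻¹ • x)), iteratedFDeriv_comp_const_smul _ hψ]
  simp only [norm_smul, norm_inv, norm_pow, Real.norm_of_nonneg hs.le, pow_add, mul_inv, inv_pow,
    mul_assoc]

lemma mu_concentrate_le (hψ : ContDiff ℝ ∞ ψ) (hs : 0 < s) (hs1 : s ≤ 1) (c : F) (q l : ℕ) :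
    mu (q : ℤ) l (concentrate ψ s c) ≤
      ENNReal.ofReal ((s ^ (finrank ℝ F + l))⁻¹ * (1 + ‖c‖) ^ q) * mu (q : ℤ) l ψ := by
  refine iSup_le fun y => iSup₂_le fun i hi => ?_
  set u := s⁻¹ • (y - c) with hu
  have hweight : 1 + ‖y‖ ≤ (1 + ‖c‖) * (1 + ‖u‖) := by
    have hy : y = c + s • u := by rw [hu, smul_inv_smul₀ hs.ne', add_sub_cancel]
    have hsu : ‖s • u‖ ≤ ‖u‖ := by
      rw [norm_smul, Real.norm_of_nonneg hs.le]
      exact mul_le_of_le_one_left (norm_nonneg u) hs1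
    rw [hy]
    nlinarith [norm_add_le c (s • u), norm_nonneg c, norm_nonneg u]
  have hscale : (s ^ (finrank ℝ F + i))⁻¹ ≤ (s ^ (finrank ℝ F + l))⁻¹ :=
    inv_anti₀ (by positivity) (pow_le_pow_of_le_one hs.le hs1 (by omega))
  refine le_trans ?_ (mul_le_mul_right (ofReal_le_mu (q : ℤ) hi ψ u) _)
  rw [← ENNReal.ofReal_mul (by positivity),
    norm_iteratedFDeriv_concentrate (hψ.of_le (by exact_mod_cast le_top)) hs]
  refine ENNReal.ofReal_le_ofReal ?_
  simp only [zpow_natCast]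
  calc (1 + ‖y‖) ^ q * ((s ^ (finrank ℝ F + i))⁻¹ * ‖iteratedFDeriv ℝ i ψ u‖)
      ≤ ((1 + ‖c‖) * (1 + ‖u‖)) ^ q *
          ((s ^ (finrank ℝ F + l))⁻¹ * ‖iteratedFDeriv ℝ i ψ u‖) := by gcongr
    _ = (s ^ (finrank ℝ F + l))⁻¹ * (1 + ‖c‖) ^ q *
          ((1 + ‖u‖) ^ q * ‖iteratedFDeriv ℝ i ψ u‖) := by rw [mul_pow]; ring

lemma schwartzLike_concentrate (hψ : SchwartzLike ψ) (hs : 0 < s) (hs1 : s ≤ 1) (c : F) :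
    SchwartzLike (concentrate ψ s c) :=
  ⟨contDiff_concentrate hψ.1 s c, fun q l => (mu_concentrate_le hψ.1 hs hs1 c q l).trans_lt
    (ENNReal.mul_lt_top ENNReal.ofReal_lt_top (hψ.2 q l))⟩

lemma SchwartzLike.isESNet_concentrate (hψ : SchwartzLike ψ) {c : ℝ → F}
    (hc : IsModeratePoint c) (M : ℕ) : IsESNet fun ε => concentrate ψ (ε ^ M) (c ε) := by
  refine ⟨fun ε hε => schwartzLike_concentrate hψ (pow_pos hε.1 M) (pow_le_one₀ hε.1.le hε.2) (c ε),
    fun q l => ?_⟩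
  obtain ⟨K, hK⟩ := hc
  obtain ⟨C, hC, hKC⟩ := hK.exists_pos
  set B := (mu (q : ℤ) l ψ).toReal with hB
  refine ⟨M * (finrank ℝ F + l) + K * q,
    isOEps_iff_eventually.2 ⟨C ^ q * (B + 1), by positivity, ?_⟩⟩
  filter_upwards [hKC.bound, eventually_mem_Ioc_zero_one] with ε hεC hε
  have hε0 : 0 < ε := hε.1
  have hweight : 1 + ‖c ε‖ ≤ C * ε ^ (-(K : ℤ)) := by
    simpa [abs_of_pos hε0, abs_of_pos (by positivity : 0 < 1 + ‖c ε‖)] using hεC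
  refine (mu_concentrate_le hψ.1 (pow_pos hε0 M) (pow_le_one₀ hε0.le hε.2) _ q l).trans ?_
  rw [← ENNReal.ofReal_toReal (hψ.2 q l).ne, ← hB, ← ENNReal.ofReal_mul (by positivity)]
  refine ENNReal.ofReal_le_ofReal ?_
  calc ((ε ^ M) ^ (finrank ℝ F + l))⁻¹ * (1 + ‖c ε‖) ^ q * B
      ≤ ((ε ^ M) ^ (finrank ℝ F + l))⁻¹ * (C * ε ^ (-(K : ℤ))) ^ q * (B + 1) := by
        gcongr
        exact le_add_of_nonneg_right zero_le_one
    _ = C ^ q * (B + 1) * ε ^ (-((M * (finrank ℝ F + l) + K * q : ℕ) : ℤ)) := by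
        simp only [zpow_neg, zpow_natCast, pow_add, pow_mul, mul_pow, inv_pow, mul_inv]
        ring

variable [FiniteDimensional ℝ F] [MeasurableSpace F] [BorelSpace F]
  (μ : Measure F) [μ.IsAddHaarMeasure]

lemma integral_mul_concentrate (g ψ : F → ℂ) (hs : 0 < s) (c : F) :
    ∫ y, g y * concentrate ψ s c y ∂μ = ∫ u, g (c + s • u) * ψ u ∂μ := by
  have hsub := integral_sub_right_eq_self (μ := μ)
    (fun x => g (c + s • s⁻¹ • x) * (s ^ finrank ℝ F)⁻¹ • ψ (s⁻¹ • x)) c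
  have hscale := Measure.integral_comp_inv_smul_of_nonneg μ
    (fun u => g (c + s • u) * (s ^ finrank ℝ F)⁻¹ • ψ u) hs.le
  simp only [smul_inv_smul₀ hs.ne', add_sub_cancel] at hsub hscale
  simp only [concentrate]
  rw [hsub, hscale]
  simp only [mul_smul_comm, integral_smul]
  rw [smul_inv_smul₀ (by positivity)]

/-- A bump function normalized to unit mass, as a complex test function. -/
noncomputable def normedBump (b : ContDiffBump (0 : F)) (y : F) : ℂ := b.normed μ y

lemma schwartzLike_normedBump (b : ContDiffBump (0 : F)) : SchwartzLike (normedBump μ b) :=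
  schwartzLike_of_hasCompactSupport (Complex.ofRealCLM.contDiff.comp b.contDiff_normed)
    (b.hasCompactSupport_normed.comp_left Complex.ofReal_zero)

lemma norm_integral_mul_concentrate_normedBump_sub_le (b : ContDiffBump (0 : F)) (hs : 0 < s)
    {g : F → ℂ} (hg : Continuous g) {c : F} {L : ℝ}
    (hL : ∀ y, ‖y - c‖ ≤ s * b.rOut → ‖g y - g c‖ ≤ L) :
    ‖∫ y, g y * concentrate (normedBump μ b) s c y ∂μ - g c‖ ≤ L := by
  let k : F → ℂ := fun u => g (c - s • u)
  have hconv : ∫ y, g y * concentrate (normedBump μ b) s c y ∂μ =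
      convolution (b.normed μ) k (ContinuousLinearMap.lsmul ℝ ℝ) μ 0 := by
    simp [integral_mul_concentrate μ g _ hs, convolution, k, normedBump, mul_comm]
  have hk0 : g c = k 0 := by simp [k]
  rw [hconv, hk0, ← dist_eq_norm]
  refine ContDiffBump.dist_normed_convolution_le
    (by fun_prop : Continuous k).aestronglyMeasurable fun u hu => ?_
  rw [dist_eq_norm, ← hk0]
  refine hL _ ?_
  rw [sub_sub_cancel_left, norm_neg, norm_smul, Real.norm_of_nonneg hs.le]
  gcongr
  exact (mem_ball_zero_iff.1 hu).le

end Mollification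

section Kernel

variable {E F : Type*} [NormedAddCommGroup E] [NormedSpace ℝ E]
  [NormedAddCommGroup F] [NormedSpace ℝ F] [FiniteDimensional ℝ F]
  [MeasurableSpace F] [BorelSpace F] (μ : Measure F) [μ.IsAddHaarMeasure]
  {H : ℝ → E × F → ℂ}

lemma norm_integral_slice_mul_concentrate_sub_le {h : E × F → ℂ} (hh : Differentiable ℝ h)
    {B s : ℝ} {q : ℕ} (hB : ∀ w, ‖fderiv ℝ h w‖ ≤ B * (1 + ‖w‖) ^ q) (hs : 0 < s) (hs1 : s ≤ 1)
    {b : ContDiffBump (0 : F)} (hb : b.rOut = 1) (z : E × F) :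
    ‖∫ y, h (z.1, y) * concentrate (normedBump μ b) s z.2 y ∂μ - h z‖ ≤
      2 ^ q * B * (1 + ‖z‖) ^ q * s := by
  have hB0 : 0 ≤ B := by simpa using (norm_nonneg _).trans (hB 0)
  have hcont := hh.continuous
  refine norm_integral_mul_concentrate_normedBump_sub_le μ b hs (g := fun y => h (z.1, y))
    (by fun_prop) fun y hy => ?_
  have hdist : ‖(z.1, y) - z‖ ≤ s := by simpa [Prod.norm_def, hb] using hy
  refine (norm_sub_le_of_norm_fderiv_le_weight hh hB (hdist.trans hs1)).trans ?_
  gcongr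

lemma IsEtauNet.exists_isBigO_integral_sub_apply (hH : IsEtauNet H) {z : ℝ → E × F}
    (hz : IsModeratePoint z) {b : ContDiffBump (0 : F)} (hb : b.rOut = 1) (p : ℕ) :
    ∃ M : ℕ, (fun ε => ∫ y, H ε ((z ε).1, y) *
        concentrate (normedBump μ b) (ε ^ M) (z ε).2 y ∂μ - H ε (z ε)) =O[𝓝[>] 0]
      fun ε => ε ^ p := by
  obtain ⟨q, N, hqN⟩ := hH.2 1
  obtain ⟨C, -, hC⟩ := (isOEps_mu_neg_iff fun ε hε => by positivity).1 hqN
  obtain ⟨K, hK⟩ := hz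
  refine ⟨N + K * q + p, IsBigO.trans (.of_bound (2 ^ q * C) ?_) (isBigO_zpow_mul_pow hK N q p)⟩
  filter_upwards [hC, eventually_mem_Ioc_zero_one] with ε hεC hε
  have hε0 : 0 < ε := hε.1
  have hgrad : ∀ w, ‖fderiv ℝ (H ε) w‖ ≤ C * ε ^ (-(N : ℤ)) * (1 + ‖w‖) ^ q := fun w =>
    norm_iteratedFDeriv_one (𝕜 := ℝ) (H ε) ▸ hεC w 1 le_rfl
  refine (norm_integral_slice_mul_concentrate_sub_le μ ((hH.1 ε hε).1.differentiable (by simp))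
    hgrad (pow_pos hε0 _) (pow_le_one₀ hε0.le hε.2) hb (z ε)).trans_eq ?_
  rw [Real.norm_of_nonneg (by positivity)]
  ring

lemma IsEtauNet.isBigO_apply_of_integral_negligible (hH : IsEtauNet H)
    (hnull : ∀ f : ℝ → F → ℂ, IsESNet f →
      IsNegligibleOfOrderZero fun ε (x : E) => ∫ y, H ε (x, y) * f ε y ∂μ)
    {z : ℝ → E × F} (hz : IsModeratePoint z) (p : ℕ) :
    (fun ε => H ε (z ε)) =O[𝓝[>] 0] fun ε => ε ^ p := by
  let b : ContDiffBump (0 : F) := ⟨1 / 2, 1, by norm_num, by norm_num⟩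
  obtain ⟨M, hM⟩ := hH.exists_isBigO_integral_sub_apply μ hz (b := b) rfl p
  have hδ : IsESNet fun ε => concentrate (normedBump μ b) (ε ^ M) (z ε).2 :=
    (schwartzLike_normedBump μ b).isESNet_concentrate
      (hz.of_norm_le fun ε => norm_snd_le (z ε)) M
  have hvalue := (hnull _ hδ).isBigO_apply (hz.of_norm_le fun ε => norm_fst_le (z ε)) p
  exact (hvalue.sub hM).congr_left fun ε => sub_sub_cancel _ _

theorem stmt9_general (hH : IsEtauNet H)
    (hnull : ∀ f : ℝ → F → ℂ, IsESNet f →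
      IsNegligibleOfOrderZero fun ε (x : E) => ∫ y, H ε (x, y) * f ε y ∂μ) :
    IsNtauNet H :=
  hH.isNtauNet_of_isNegligibleOfOrderZero <|
    hH.isNegligibleOfOrderZero_of_isBigO_apply fun _ hz =>
      hH.isBigO_apply_of_integral_negligible μ hnull hz

end Kernel

/-- injectivity of the map sending a tempered generalized kernel to the
induced integral operator. -/
theorem stmt9 (m n : ℕ) (hm : 1 ≤ m) (hn : 1 ≤ n)
    (H : ℝ → ((Fin m → ℝ) × (Fin n → ℝ)) → ℂ) (hH : IsEtauNet H)
    (hnull : ∀ f : ℝ → (Fin n → ℝ) → ℂ, IsESNet f →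
      IsNtauNet (fun ε (x : Fin m → ℝ) => ∫ y : Fin n → ℝ, H ε (x, y) * f ε y)) :
    IsNtauNet H := by
  exact stmt9_general volume hH fun f hf => (hnull f hf).isNegligibleOfOrderZero
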